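/- Let q be a real number with 0 < q and q ≠ 1, let h₁, l₁, l₂, α₁, λ be real numbers and t₁, t₂ nonzero reals, and let (i,i') = (1,2) or (i,i') = (2,1). Assume λ + α₁ = -N for some positive integer N (so (q^{λ+α₁};q)_n = 0 for all n > N and the series below is a finite sum), and assume q^{h₁-l_i+n}·t₁/t_i ≠ 1 for all integers 1 ≤ n ≤ N. Then the function g(x) = x^{λ} · Σ_{n=0}^{N} (q^{-λ-α₁+h₁-l_{i'}+1}·t₁/t_{i'})^n · (q^{λ+α₁};q)_n / ((q^{h₁-l_i+1}·t₁/t_i;q)_n (q;q)_n) · (x/(q^{l_i-1/2}t_i);q)_n satisfies the variant of the confluent q-hypergeometric equation of type (2,1) for all x > 0. -/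

import Mathlib

/-- The finite q-shifted factorial `(a;q)_n = ∏_{i=0}^{n-1} (1 - a q^i)`. -/
noncomputable def qPoch (q a : ℝ) (n : ℕ) : ℝ :=
  ∏ i ∈ Finset.range n, (1 - a * q ^ i)

/-- The variant of the confluent q-hypergeometric equation of type (2,1) (for `x > 0`). -/
def confEq21 (q h₁ l₁ l₂ α₁ lam t₁ t₂ : ℝ) (g : ℝ → ℝ) : Prop :=
  ∀ x : ℝ, 0 < x →
    (x - q ^ (l₁ - 1/2) * t₁) * (x - q ^ (l₂ - 1/2) * t₂) * g (q * x)
    - q ^ (-h₁ + l₁ + l₂ + 2 * lam - 1/2) * t₂ * (x - q ^ (h₁ + 1/2) * t₁) * g (x / q)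
    - (q ^ (-α₁) * x ^ 2
        - q ^ (l₁ + l₂ + lam - 1/2) * (q ^ (-l₂) * t₁ + (q ^ (-h₁) + q ^ (-l₁)) * t₂) * x
        + q ^ (l₁ + l₂ + lam) * (1 + q⁻¹) * t₁ * t₂) * g x = 0

lemma qPoch_succ (q a : ℝ) (n : ℕ) : qPoch q a (n + 1) = qPoch q a n * (1 - a * q ^ n) := by
  simp [qPoch, Finset.prod_range_succ]

lemma qPoch_shift (q a : ℝ) (n : ℕ) :
    qPoch q a (n + 1) = (1 - a) * qPoch q (q * a) n := by
  simp only [qPoch, Finset.prod_range_succ']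
  rw [mul_comm]
  congr 1
  · simp
  · apply Finset.prod_congr rfl
    intro i _
    ring

/-- Telescoping identity for the partial sums. -/
lemma core_partial (q B r y : ℝ) (N : ℕ) (c : ℕ → ℝ) (hq : q ≠ 0) (hB : B ≠ 0)
    (hc : ∀ n, n < N → (1 - q ^ (n + 1)) * (1 - B * q ^ n) * c (n + 1)
      = B * r * (q ^ N - q ^ n) * c n) (M : ℕ) (hM : M ≤ N) :
    (1 - y) * (1 - r * y) * (∑ n ∈ Finset.range (M + 1), c n * qPoch q (q * y) n)
    - (q / B) * (y - B) * (∑ n ∈ Finset.range (M + 1), c n * qPoch q (y / q) n)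
    - (q ^ N * r * y ^ 2 - (r + 1 + q / B) * y + (1 + q))
      * (∑ n ∈ Finset.range (M + 1), c n * qPoch q y n)
    = y ^ 2 * r * (q ^ M - q ^ N) * c M * qPoch q y M := by
  induction M with
  | zero =>
    simp [qPoch]
    field_simp
    ring
  | succ M ih =>
    have ih := ih (by omega)
    have hc := hc M (by omega)
    rw [Finset.sum_range_succ _ (M + 1), Finset.sum_range_succ _ (M + 1),
      Finset.sum_range_succ _ (M + 1)]
    have e1 : (1 - y) * qPoch q (q * y) (M + 1)
        = qPoch q y M * (1 - y * q ^ M) * (1 - y * q ^ (M + 1)) := by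
      rw [← qPoch_shift, qPoch_succ, qPoch_succ]
    have e2 : qPoch q (y / q) (M + 1) = (1 - y / q) * qPoch q y M := by
      rw [qPoch_shift, mul_div_cancel₀ _ hq]
    have e3 := qPoch_succ q y M
    generalize (∑ n ∈ Finset.range (M + 1), c n * qPoch q (q * y) n) = S1 at *
    generalize (∑ n ∈ Finset.range (M + 1), c n * qPoch q (y / q) n) = S2 at *
    generalize (∑ n ∈ Finset.range (M + 1), c n * qPoch q y n) = S3 at *
    rw [e2, e3]
    have hc' : (1 - q ^ (M + 1)) * (1 / B - q ^ M) * c (M + 1)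
      = r * (q ^ N - q ^ M) * c M := by
      field_simp
      linear_combination hc
    have e4 : (q / B) * (y - B) * (1 - y / q) = (y - B) * (q - y) * (1 / B) := by
      field_simp
    have e5 : q / B = q * (1 / B) := by ring
    have e6 : B * (1 / B) = 1 := by field_simp
    rw [e5] at ih e4 ⊢
    clear e5
    generalize 1 / B = b at *
    generalize c (M + 1) = C at *
    rw [pow_succ q M] at *
    linear_combination ih + (1 - r * y) * C * e1 + y ^ 2 * qPoch q y M * hc'
      - C * qPoch q y M * e4 + C * qPoch q y M * (q - y) * e6

lemma eq_final (q h l₁ l₂ α₁ lam t₁ t₂ a b : ℝ) (N : ℕ) (hq : 0 < q) (hh : h ≠ 0)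
    (ha : a ≠ 0) (hb : b ≠ 0) (c : ℕ → ℝ) (h₁ : ℝ) 
    (hα : q ^ (-α₁) = q ^ lam * q ^ N)
    (hA : ∀ x : ℝ, (x - q ^ (l₁ - 1/2) * t₁) * (x - q ^ (l₂ - 1/2) * t₂) = (x - a) * (x - b))
    (hH : q ^ (h₁ + 1/2) * t₁ = h)
    (hK : q ^ (-h₁ + l₁ + l₂ + 2 * lam - 1/2) * t₂ = a * b * q / h * (q ^ lam) ^ 2)
    (hL : q ^ (l₁ + l₂ + lam - 1/2) * (q ^ (-l₂) * t₁ + (q ^ (-h₁) + q ^ (-l₁)) * t₂)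
      = q ^ lam * (a + b + q * a * b / h))
    (hC : q ^ (l₁ + l₂ + lam) * (1 + q⁻¹) * t₁ * t₂ = q ^ lam * (a * b * (1 + q)))
    (hc : ∀ n, n < N → (1 - q ^ (n + 1)) * (1 - h / a * q ^ n) * c (n + 1)
      = h / a * (a / b) * (q ^ N - q ^ n) * c n) :
    confEq21 q h₁ l₁ l₂ α₁ lam t₁ t₂ (fun x =>
      x ^ lam * ∑ n ∈ Finset.range (N + 1), c n * qPoch q (x / a) n) := by
  intro x hx
  have key := core_partial q (h / a) (a / b) (x / a) N c hq.ne' (div_ne_zero hh ha) hc N le_rfl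
  simp only [hA, hH, hK, hL, hC, hα]
  rw [Real.mul_rpow hq.le hx.le, Real.div_rpow hx.le hq.le]
  rw [show q * x / a = q * (x / a) by ring, show x / q / a = x / a / q by ring]
  generalize (∑ n ∈ Finset.range (N + 1), c n * qPoch q (q * (x / a)) n) = S1 at *
  generalize (∑ n ∈ Finset.range (N + 1), c n * qPoch q (x / a / q) n) = S2 at *
  generalize (∑ n ∈ Finset.range (N + 1), c n * qPoch q (x / a) n) = S3 at *
  have hL0 : q ^ lam ≠ 0 := (Real.rpow_pos_of_pos hq _).ne'
  generalize q ^ lam = L at *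
  generalize x ^ lam = X at *
  rw [sub_self, mul_zero, zero_mul, zero_mul] at key
  have e1 : (x - a) * (x - b) = a * b * ((1 - x / a) * (1 - a / b * (x / a))) := by
    field_simp; ring
  have e2 : a * b * q / h * L ^ 2 * (x - h) * (X / L * S2)
      = a * b * (L * X) * (q / (h / a) * (x / a - h / a) * S2) := by
    field_simp
  have e3 : L * q ^ N * x ^ 2 - L * (a + b + q * a * b / h) * x + L * (a * b * (1 + q))
    = a * b * L * (q ^ N * (a / b) * (x / a) ^ 2 - (a / b + 1 + q / (h / a)) * (x / a) + (1 + q)) := by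
    field_simp
  rw [e1, e2, e3]
  linear_combination a * b * L * X * key

lemma coef_rec (q B Z r : ℝ) (N : ℕ) (hq : 0 < q) (hq1 : q ≠ 1) (A : ℝ) (hA : A * q ^ N = 1)
    (hZ : Z = q ^ N * (B * r)) (hB : ∀ n, n < N → 1 - B * q ^ n ≠ 0) (n : ℕ) (hn : n < N) :
    (1 - q ^ (n + 1)) * (1 - B * q ^ n) *
      (Z ^ (n + 1) * (qPoch q A (n + 1) / (qPoch q B (n + 1) * qPoch q q (n + 1))))
    = B * r * (q ^ N - q ^ n) * (Z ^ n * (qPoch q A n / (qPoch q B n * qPoch q q n))) := by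
  have hqn : ∀ m : ℕ, 1 - q * q ^ m ≠ 0 := by
    intro m h
    have : q ^ (m + 1) = 1 := by rw [pow_succ]; linarith
    exact hq1 ((pow_eq_one_iff_of_nonneg hq.le (by omega)).1 this)
  have h1 : qPoch q q n ≠ 0 := Finset.prod_ne_zero_iff.2 fun i _ => hqn i
  have h2 : qPoch q B n ≠ 0 := Finset.prod_ne_zero_iff.2 fun i hi =>
    hB i (by have := Finset.mem_range.1 hi; omega)
  have h3 := hB n hn
  have h4 := hqn n
  rw [qPoch_succ, qPoch_succ, qPoch_succ, pow_succ Z, pow_succ q]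
  have e : (1 - q ^ n * q) * (1 - B * q ^ n) * (Z ^ n * Z * (qPoch q A n * (1 - A * q ^ n) /
      (qPoch q B n * (1 - B * q ^ n) * (qPoch q q n * (1 - q * q ^ n)))))
      = Z * (1 - A * q ^ n) * (Z ^ n * (qPoch q A n / (qPoch q B n * qPoch q q n))) := by
    rw [mul_comm (q ^ n) q]
    generalize 1 - B * q ^ n = u at *
    generalize 1 - q * q ^ n = v at *
    generalize 1 - A * q ^ n = w at *
    field_simp
  rw [e]
  congr 1
  rw [hZ]
  linear_combination (-(B * r) * q ^ n) * hA

theorem stmt11 (q h₁ l₁ l₂ α₁ lam t₁ t₂ lᵢ lᵢ' tᵢ tᵢ' : ℝ) (N : ℕ)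
    (hq : 0 < q) (hq1 : q ≠ 1) (ht₁ : t₁ ≠ 0) (ht₂ : t₂ ≠ 0)
    (hidx : (lᵢ, lᵢ', tᵢ, tᵢ') = (l₁, l₂, t₁, t₂) ∨ (lᵢ, lᵢ', tᵢ, tᵢ') = (l₂, l₁, t₂, t₁))
    (hN : 0 < N) (hNlam : lam + α₁ = -(N : ℝ))
    (hden : ∀ n : ℕ, 1 ≤ n → n ≤ N → q ^ (h₁ - lᵢ + (n : ℝ)) * t₁ / tᵢ ≠ 1) :
    confEq21 q h₁ l₁ l₂ α₁ lam t₁ t₂ (fun x =>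
      x ^ lam * ∑ n ∈ Finset.range (N + 1),
        (q ^ (-lam - α₁ + h₁ - lᵢ' + 1) * t₁ / tᵢ') ^ n *
            (qPoch q (q ^ (lam + α₁)) n /
              (qPoch q (q ^ (h₁ - lᵢ + 1) * t₁ / tᵢ) n * qPoch q q n)) *
          qPoch q (x / (q ^ (lᵢ - 1/2) * tᵢ)) n) := by
  have hti : tᵢ ≠ 0 := by
    rcases hidx with h | h <;> simp only [Prod.mk.injEq] at h <;> obtain ⟨-, -, h, -⟩ := h <;>
      rw [h] <;> assumption
  have hti' : tᵢ' ≠ 0 := by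
    rcases hidx with h | h <;> simp only [Prod.mk.injEq] at h <;> obtain ⟨-, -, -, h⟩ := h <;>
      rw [h] <;> assumption
  have P : ∀ s : ℝ, q ^ s ≠ 0 := fun s => (Real.rpow_pos_of_pos hq s).ne'
  have hqN : q ^ (N : ℝ) = q ^ N := Real.rpow_natCast q N
  have hBdef : ∀ s l t : ℝ, t ≠ 0 → q ^ (h₁ - l + 1 + s) * t₁ / t
      = q ^ s * ((q ^ (h₁ + 1/2) * t₁) / (q ^ (l - 1/2) * t)) := by
    intro s l t ht
    have : q ^ (h₁ - l + 1 + s) * q ^ (l - 1/2) = q ^ s * q ^ (h₁ + 1/2) := by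
      rw [← Real.rpow_add hq, ← Real.rpow_add hq]; congr 1; ring
    have hp := P (l - 1/2)
    generalize q ^ (l - 1/2) = u at *
    generalize q ^ (h₁ + 1/2) = v at *
    field_simp
    linear_combination this
  have hB0 : q ^ (h₁ - lᵢ + 1) * t₁ / tᵢ
      = (q ^ (h₁ + 1/2) * t₁) / (q ^ (lᵢ - 1/2) * tᵢ) := by
    have := hBdef 0 lᵢ tᵢ hti
    simpa using this
  have hZ0 : q ^ (-lam - α₁ + h₁ - lᵢ' + 1) * t₁ / tᵢ'
      = q ^ N * ((q ^ (h₁ + 1/2) * t₁) / (q ^ (lᵢ' - 1/2) * tᵢ')) := by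
    rw [← hqN, ← hBdef N lᵢ' tᵢ' hti']
    congr 3
    linarith
  have e2 : ∀ l : ℝ, q ^ l = q ^ (l - 1/2) * q ^ (1/2 : ℝ) := by
    intro l; rw [← Real.rpow_add hq]; congr 1; ring
  have hhalf : q ^ (1/2 : ℝ) * q ^ (1/2 : ℝ) = q := by
    rw [← Real.rpow_add hq]; norm_num
  refine eq_final q (q ^ (h₁ + 1/2) * t₁) l₁ l₂ α₁ lam t₁ t₂ (q ^ (lᵢ - 1/2) * tᵢ)
    (q ^ (lᵢ' - 1/2) * tᵢ') N hq (mul_ne_zero (P _) ht₁) (mul_ne_zero (P _) hti)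
    (mul_ne_zero (P _) hti') _ h₁ ?_ ?_ rfl ?_ ?_ ?_ ?_
  · rw [← hqN, ← Real.rpow_add hq]; congr 1; linarith
  · intro x
    rcases hidx with h | h <;> simp only [Prod.mk.injEq] at h <;> obtain ⟨rfl, rfl, rfl, rfl⟩ := h <;>
      ring
  · have hs : q ^ (lᵢ - 1/2) * tᵢ * (q ^ (lᵢ' - 1/2) * tᵢ')
        = q ^ (l₁ - 1/2) * t₁ * (q ^ (l₂ - 1/2) * t₂) := by
      rcases hidx with h | h <;> simp only [Prod.mk.injEq] at h <;>
        obtain ⟨rfl, rfl, rfl, rfl⟩ := h <;> ring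
    rw [hs]
    have : q ^ (-h₁ + l₁ + l₂ + 2 * lam - 1/2) * q ^ (h₁ + 1/2)
        = q ^ (l₁ - 1/2) * q ^ (l₂ - 1/2) * q * (q ^ lam) ^ 2 := by
      rw [pow_two, ← Real.rpow_add hq, ← Real.rpow_add hq, ← Real.rpow_add_one hq.ne',
        ← Real.rpow_add hq, ← Real.rpow_add hq]
      congr 1; ring
    have h2 := P (h₁ + 1/2)
    generalize q ^ (h₁ + 1/2) = v at *
    generalize q ^ (l₁ - 1/2) = u₁ at *
    generalize q ^ (l₂ - 1/2) = u₂ at *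
    generalize q ^ (-h₁ + l₁ + l₂ + 2 * lam - 1/2) = w at *
    generalize q ^ lam = L at *
    field_simp
    linear_combination this
  · have hs : q ^ (lᵢ - 1/2) * tᵢ + (q ^ (lᵢ' - 1/2) * tᵢ') + q * (q ^ (lᵢ - 1/2) * tᵢ) * (q ^ (lᵢ' - 1/2) * tᵢ') / (q ^ (h₁ + 1/2) * t₁)
        = q ^ (l₁ - 1/2) * t₁ + q ^ (l₂ - 1/2) * t₂ + q * q ^ (l₁ - 1/2) * q ^ (l₂ - 1/2) / q ^ (h₁ + 1/2) * t₂ := by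
      have h2 := P (h₁ + 1/2)
      rcases hidx with h | h <;> simp only [Prod.mk.injEq] at h <;>
        obtain ⟨rfl, rfl, rfl, rfl⟩ := h <;> field_simp <;> ring
    rw [hs]
    have f1 : q ^ (l₁ + l₂ + lam - 1/2) * q ^ (-l₂) = q ^ lam * q ^ (l₁ - 1/2) := by
      rw [← Real.rpow_add hq, ← Real.rpow_add hq]; congr 1; ring
    have f2 : q ^ (l₁ + l₂ + lam - 1/2) * q ^ (-l₁) = q ^ lam * q ^ (l₂ - 1/2) := by
      rw [← Real.rpow_add hq, ← Real.rpow_add hq]; congr 1; ring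
    have f3 : q ^ (l₁ + l₂ + lam - 1/2) * q ^ (-h₁)
        = q ^ lam * (q * q ^ (l₁ - 1/2) * q ^ (l₂ - 1/2) / q ^ (h₁ + 1/2)) := by
      rw [mul_comm q, ← Real.rpow_add_one hq.ne', ← Real.rpow_add hq, ← Real.rpow_add hq,
        ← Real.rpow_sub hq, ← Real.rpow_add hq]
      congr 1; ring
    linear_combination t₁ * f1 + t₂ * f2 + t₂ * f3
  · have hs : q ^ (lᵢ - 1/2) * tᵢ * (q ^ (lᵢ' - 1/2) * tᵢ')
        = q ^ (l₁ - 1/2) * t₁ * (q ^ (l₂ - 1/2) * t₂) := by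
      rcases hidx with h | h <;> simp only [Prod.mk.injEq] at h <;>
        obtain ⟨rfl, rfl, rfl, rfl⟩ := h <;> ring
    rw [hs]
    have f1 : q ^ (l₁ + l₂ + lam) = q ^ lam * q ^ (l₁ - 1/2) * q ^ (l₂ - 1/2) * q := by
      rw [← Real.rpow_add hq, ← Real.rpow_add hq, ← Real.rpow_add_one hq.ne']
      congr 1; ring
    have f2 : q * q⁻¹ = 1 := mul_inv_cancel₀ hq.ne'
    rw [f1]
    linear_combination q ^ lam * q ^ (l₁ - 1/2) * q ^ (l₂ - 1/2) * t₁ * t₂ * f2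
  · intro n hn
    rw [hB0]
    refine coef_rec q _ _ _ N hq hq1 _ ?_ ?_ ?_ n hn
    · rw [← hqN, ← Real.rpow_add hq, hNlam]; simp
    · rw [hZ0, div_mul_div_cancel₀ (mul_ne_zero (P _) hti)]
    · intro m hm h0
      apply hden (m + 1) (by omega) (by omega)
      have := hBdef m lᵢ tᵢ hti
      rw [Real.rpow_natCast] at this
      push_cast
      rw [show h₁ - lᵢ + ((m : ℝ) + 1) = h₁ - lᵢ + 1 + m by ring, this]
      linarith
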